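/- Let (X, F, μ, T) be a measure-preserving system on a probability space and let f be a measurable function on X with ∫ |f| log^+ |f| dμ < ∞ (i.e. f ∈ L log L). Define N*(f)(x) = sup_{n ≥ 1} (1/n) · #{ k ≥ 1 : |f|(T^k x)/k ≥ 1/n }. Then N*(f) ∈ L^1(μ). -/

import Mathlib

open MeasureTheory Filter Topology
open scoped ENNReal

namespace AssaniAux

variable {X : Type*}

/-- Recursive form of `max (0, S_1, …, S_n)` for the function `u - l`. -/
noncomputable def G (T : X → X) (u : X → ℝ≥0∞) (l : ℝ≥0∞) : ℕ → X → ℝ≥0∞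
  | 0, _ => 0
  | n + 1, x => u x + G T u l n (T x) - l

lemma G_mono (T : X → X) (u : X → ℝ≥0∞) (l : ℝ≥0∞) (n : ℕ) :
    ∀ x, G T u l n x ≤ G T u l (n + 1) x := by
  induction n with
  | zero => intro x; simp [G]
  | succ n ih =>
    intro x
    have := ih (T x)
    rw [G, G]
    gcongr

lemma G_le (T : X → X) (u : X → ℝ≥0∞) (l : ℝ≥0∞) (hu : ∀ x, u x ≤ 1) (n : ℕ) :
    ∀ x, G T u l n x ≤ n := by
  induction n with
  | zero => intro x; simp [G]
  | succ n ih =>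
    intro x
    rw [G]
    refine tsub_le_self.trans ?_
    push_cast
    rw [add_comm]
    exact add_le_add (ih _) (hu x)

lemma sum_le_G (T : X → X) (u : X → ℝ≥0∞) (l : ℝ≥0∞) (n : ℕ) :
    ∀ x, ∑ k ∈ Finset.range n, u (T^[k] x) ≤ n * l + G T u l n x := by
  induction n with
  | zero => intro x; simp
  | succ n ih =>
    intro x
    rw [Finset.sum_range_succ']
    have h1 := ih (T x)
    have h2 : u x + G T u l n (T x) ≤ G T u l (n + 1) x + l := by
      rw [G]; exact le_tsub_add
    calc ∑ k ∈ Finset.range n, u (T^[k+1] x) + u (T^[0] x)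
        ≤ (n * l + G T u l n (T x)) + u x := by
          refine add_le_add ?_ (by simp)
          simpa [Function.iterate_succ_apply] using h1
      _ = n * l + (u x + G T u l n (T x)) := by ring
      _ ≤ n * l + (G T u l (n + 1) x + l) := by gcongr
      _ = _ := by push_cast; ring

variable [MeasurableSpace X]

lemma G_meas {T : X → X} (hT : Measurable T) {u : X → ℝ≥0∞} (hu : Measurable u)
    (l : ℝ≥0∞) (n : ℕ) : Measurable (G T u l n) := by
  induction n with
  | zero => exact measurable_const
  | succ n ih =>
    change Measurable fun x => u x + G T u l n (T x) - l
    exact (hu.add (ih.comp hT)).sub_const l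

lemma garsia (μ : Measure X) [IsProbabilityMeasure μ] {T : X → X}
    (hT : MeasurePreserving T μ μ) {u : X → ℝ≥0∞} (hu : Measurable u)
    (hu1 : ∀ x, u x ≤ 1) (l : ℝ≥0∞) (n : ℕ) :
    l * μ {x | 0 < G T u l n x} ≤ ∫⁻ x, u x ∂μ := by
  have hG := G_meas hT.measurable hu l n
  have hE : MeasurableSet {x | 0 < G T u l n x} := measurableSet_lt measurable_const hG
  have hfin : ∫⁻ x, G T u l n x ∂μ ≠ ⊤ := by
    refine ne_top_of_le_ne_top (b := (n : ℝ≥0∞)) (by simp) ?_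
    calc ∫⁻ x, G T u l n x ∂μ ≤ ∫⁻ _, (n : ℝ≥0∞) ∂μ := lintegral_mono (G_le T u l hu1 n)
      _ = n := by simp
  have hpt : ∀ x, {x | 0 < G T u l n x}.indicator (fun _ => l) x + G T u l n x
      ≤ u x + G T u l n (T x) := by
    intro x
    by_cases hx : 0 < G T u l n x
    · rw [Set.indicator_of_mem (by exact hx)]
      cases n with
      | zero => simp [G] at hx
      | succ n =>
        have h1 : l ≤ u x + G T u l n (T x) := by
          rw [G] at hx; exact (tsub_pos_iff_lt.1 hx).le
        have h2 : G T u l (n+1) x = u x + G T u l n (T x) - l := by rw [G]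
        rw [h2, add_tsub_cancel_of_le h1]
        exact add_le_add le_rfl (G_mono T u l n _)
    · rw [Set.indicator_of_notMem (by exact hx)]
      have : G T u l n x = 0 := by simpa using hx
      simp [this]
  have h := lintegral_mono (μ := μ) hpt
  rw [lintegral_add_right _ hG, lintegral_add_left hu, lintegral_indicator hE,
    setLIntegral_const, hT.lintegral_comp hG] at h
  exact (ENNReal.add_le_add_iff_right hfin).1 h

/-- Maximal function. -/
noncomputable def M (T : X → X) (u : X → ℝ≥0∞) (x : X) : ℝ≥0∞ :=
  ⨆ n : ℕ, (∑ k ∈ Finset.range (n + 1), u (T^[k] x)) / ((n : ℝ≥0∞) + 1)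

lemma M_meas {T : X → X} (hT : Measurable T) {u : X → ℝ≥0∞} (hu : Measurable u) :
    Measurable (M T u) := by
  refine Measurable.iSup fun n => Measurable.div_const ?_ _
  exact Finset.measurable_sum _ fun k _ => hu.comp (hT.iterate k)

lemma M_le_one (T : X → X) {u : X → ℝ≥0∞} (hu1 : ∀ x, u x ≤ 1) (x : X) : M T u x ≤ 1 := by
  refine iSup_le fun n => ENNReal.div_le_of_le_mul ?_
  calc _ ≤ ∑ k ∈ Finset.range (n + 1), (1 : ℝ≥0∞) := Finset.sum_le_sum fun k _ => hu1 _
    _ = _ := by simp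

lemma weak (μ : Measure X) [IsProbabilityMeasure μ] {T : X → X}
    (hT : MeasurePreserving T μ μ) {u : X → ℝ≥0∞} (hu : Measurable u)
    (hu1 : ∀ x, u x ≤ 1) (l : ℝ≥0∞) :
    l * μ {x | l < M T u x} ≤ ∫⁻ x, u x ∂μ := by
  have hsub : {x | l < M T u x} ⊆ ⋃ n, {x | 0 < G T u l n x} := by
    intro x hx
    obtain ⟨n, hn⟩ := lt_iSup_iff.1 (show l < M T u x from hx)
    refine Set.mem_iUnion.2 ⟨n + 1, ?_⟩
    by_contra h0
    have h0 : G T u l (n+1) x = 0 := by simpa using h0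
    have h1 := sum_le_G T u l (n + 1) x
    rw [h0, add_zero] at h1
    refine absurd hn (not_lt.2 (ENNReal.div_le_of_le_mul ?_))
    rw [mul_comm]; exact_mod_cast h1
  have hmono : Monotone fun n => {x | 0 < G T u l n x} :=
    monotone_nat_of_le_succ fun n x hx => lt_of_lt_of_le hx (G_mono T u l n x)
  calc l * μ {x | l < M T u x} ≤ l * μ (⋃ n, {x | 0 < G T u l n x}) := by gcongr
    _ = ⨆ n, l * μ {x | 0 < G T u l n x} := by rw [hmono.measure_iUnion, ENNReal.mul_iSup]
    _ ≤ _ := iSup_le fun n => garsia μ hT hu hu1 l n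

lemma M_pt {y : ℝ≥0∞} (hy : y ≤ 1) (m : ℕ) :
    y ≤ (2⁻¹ : ℝ≥0∞) ^ m +
      ∑ i ∈ Finset.range m, if (2⁻¹ : ℝ≥0∞) ^ (i + 1) < y then (2⁻¹ : ℝ≥0∞) ^ i else 0 := by
  induction m with
  | zero => simpa using hy
  | succ m ih =>
    by_cases h : (2⁻¹ : ℝ≥0∞) ^ (m + 1) < y
    · rw [Finset.sum_range_succ, if_pos h]
      refine ih.trans ?_
      rw [add_comm ((2⁻¹ : ℝ≥0∞) ^ m)]
      exact le_add_self
    · exact (not_lt.1 h).trans le_self_add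

lemma strong (μ : Measure X) [IsProbabilityMeasure μ] {T : X → X}
    (hT : MeasurePreserving T μ μ) {u : X → ℝ≥0∞} (hu : Measurable u)
    (hu1 : ∀ x, u x ≤ 1) (m : ℕ) :
    ∫⁻ x, M T u x ∂μ ≤ (2⁻¹ : ℝ≥0∞) ^ m + m * (2 * ∫⁻ x, u x ∂μ) := by
  have hM := M_meas hT.measurable hu
  have hs : ∀ i : ℕ, MeasurableSet {x | (2⁻¹ : ℝ≥0∞) ^ (i + 1) < M T u x} := fun i =>
    measurableSet_lt measurable_const hM
  calc ∫⁻ x, M T u x ∂μ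
      ≤ ∫⁻ x, ((2⁻¹ : ℝ≥0∞) ^ m + ∑ i ∈ Finset.range m,
        {x | (2⁻¹ : ℝ≥0∞) ^ (i + 1) < M T u x}.indicator (fun _ => (2⁻¹ : ℝ≥0∞) ^ i) x) ∂μ := by
        refine lintegral_mono fun x => ?_
        have := M_pt (M_le_one T hu1 x) m
        simpa only [Set.indicator_apply, Set.mem_ofPred_eq] using this
    _ = (2⁻¹ : ℝ≥0∞) ^ m + ∑ i ∈ Finset.range m,
        (2⁻¹ : ℝ≥0∞) ^ i * μ {x | (2⁻¹ : ℝ≥0∞) ^ (i + 1) < M T u x} := by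
        rw [lintegral_add_left measurable_const, lintegral_finsetSum]
        · simp [lintegral_indicator (hs _)]
        · exact fun i _ => measurable_const.indicator (hs i)
    _ ≤ (2⁻¹ : ℝ≥0∞) ^ m + ∑ i ∈ Finset.range m, (2 * ∫⁻ x, u x ∂μ) := by
        refine add_le_add le_rfl (Finset.sum_le_sum fun i _ => ?_)
        have := weak μ hT hu hu1 ((2⁻¹ : ℝ≥0∞) ^ (i + 1))
        calc (2⁻¹ : ℝ≥0∞) ^ i * μ {x | (2⁻¹ : ℝ≥0∞) ^ (i + 1) < M T u x}
            = 2 * ((2⁻¹ : ℝ≥0∞) ^ (i+1) * μ {x | (2⁻¹ : ℝ≥0∞) ^ (i + 1) < M T u x}) := by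
              generalize μ {x | (2⁻¹ : ℝ≥0∞) ^ (i + 1) < M T u x} = c
              calc (2⁻¹ : ℝ≥0∞) ^ i * c = (2 * 2⁻¹) * ((2⁻¹ : ℝ≥0∞) ^ i * c) := by
                    rw [ENNReal.mul_inv_cancel (by simp) (by simp), one_mul]
                _ = _ := by ring
          _ ≤ _ := by gcongr
    _ = _ := by simp

lemma dyadic_sum (t : ℝ) (ht : 0 ≤ t) (m : ℕ) :
    ∑ j ∈ Finset.range m, (if (2:ℝ)^j ≤ t then (2:ℝ)^j else 0) ≤ 2 * t := by
  induction m with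
  | zero => simpa using ht
  | succ m ih =>
    by_cases h : (2:ℝ)^m ≤ t
    · calc _ ≤ ∑ j ∈ Finset.range (m+1), (2:ℝ)^j := by
            refine Finset.sum_le_sum fun j _ => ?_
            split_ifs <;> simp
        _ ≤ 2 * t := by
            rw [geom_sum_eq (by norm_num), pow_succ]; linarith
    · rw [Finset.sum_range_succ, if_neg h]; simpa using ih

lemma dyadic_log (t : ℝ) (ht : 0 ≤ t) (m : ℕ) :
    ∑ j ∈ Finset.range m, (if (2:ℝ)^j ≤ t then (j:ℝ) * (2:ℝ)^j else 0)
      ≤ (2 / Real.log 2) * (t * Real.log (max t 1)) := by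
  have hl : 0 < Real.log 2 := Real.log_pos (by norm_num)
  have hL : 0 ≤ Real.log (max t 1) := Real.log_nonneg (le_max_right _ _)
  calc _ ≤ ∑ j ∈ Finset.range m, (Real.log (max t 1) / Real.log 2) *
          (if (2:ℝ)^j ≤ t then (2:ℝ)^j else 0) := by
        refine Finset.sum_le_sum fun j _ => ?_
        split_ifs with h
        · gcongr
          rw [le_div_iff₀ hl, ← Real.log_pow]
          exact Real.log_le_log (by positivity) (h.trans (le_max_left _ _))
        · simp
    _ = (Real.log (max t 1) / Real.log 2) *
          ∑ j ∈ Finset.range m, (if (2:ℝ)^j ≤ t then (2:ℝ)^j else 0) := by rw [Finset.mul_sum]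
    _ ≤ (Real.log (max t 1) / Real.log 2) * (2 * t) := by
        gcongr; exact dyadic_sum t ht m
    _ = _ := by ring

lemma dyadic_enn (t : ℝ) (ht : 0 ≤ t) :
    ∑' j : ℕ, (if (2:ℝ)^j ≤ t then (j:ℝ≥0∞) * 2^j else 0)
      ≤ ENNReal.ofReal (2 / Real.log 2) * ENNReal.ofReal (t * Real.log (max t 1)) := by
  have hl : 0 < Real.log 2 := Real.log_pos (by norm_num)
  rw [ENNReal.tsum_eq_iSup_nat]
  refine iSup_le fun m => ?_
  rw [← ENNReal.ofReal_mul (by positivity)]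
  refine le_trans (le_of_eq ?_) (ENNReal.ofReal_le_ofReal (dyadic_log t ht m))
  rw [ENNReal.ofReal_sum_of_nonneg (fun j _ => by split_ifs <;> positivity)]
  refine Finset.sum_congr rfl fun j _ => ?_
  split_ifs
  · rw [ENNReal.ofReal_mul (by positivity), ENNReal.ofReal_pow (by norm_num)]; simp
  · simp

/-- level indicator along the orbit -/
noncomputable def U (T : X → X) (f : X → ℝ) (j : ℕ) (x : X) : ℝ≥0∞ :=
  if (2:ℝ)^j ≤ |f (T x)| then 1 else 0

lemma count_pt (T : X → X) (f : X → ℝ) (x : X) (n : ℕ) :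
    (({k : ℕ | 1 ≤ k ∧ (1 : ℝ) / (n + 1) ≤ |f (T^[k] x)| / k}.encard : ℝ≥0∞)
            / ((n : ℝ≥0∞) + 1)) ≤ 1 + ∑' j : ℕ, 2^(j+1) * M T (U T f j) x := by
  classical
  let B : ℕ → Finset ℕ := fun j =>
    (Finset.Icc 1 (2^(j+1) * (n+1))).filter fun k => (2:ℝ)^j ≤ |f (T^[k] x)|
  have hsub : {k : ℕ | 1 ≤ k ∧ (1 : ℝ) / (n + 1) ≤ |f (T^[k] x)| / k} ⊆
      (Finset.Icc 1 (n+1) : Finset ℕ) ∪ ⋃ j, (B j : Set ℕ) := by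
    rintro k ⟨hk, h⟩
    by_cases hkn : k ≤ n + 1
    · left; simp; omega
    · right
      push Not at hkn
      have hq : k / (n+1) ≠ 0 := by
        have := Nat.div_pos hkn.le (Nat.succ_pos n); omega
      refine Set.mem_iUnion.2 ⟨Nat.log 2 (k / (n+1)), ?_⟩
      have h1 : 2 ^ (Nat.log 2 (k / (n+1))) ≤ k / (n+1) := Nat.pow_log_le_self 2 hq
      have h2 : k / (n+1) < 2 ^ (Nat.log 2 (k / (n+1)) + 1) :=
        Nat.lt_pow_succ_log_self (by norm_num) _
      generalize Nat.log 2 (k / (n+1)) = j at h1 h2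
      rw [Nat.le_div_iff_mul_le (Nat.succ_pos n)] at h1
      rw [Nat.div_lt_iff_lt_mul (Nat.succ_pos n)] at h2
      simp only [B, Finset.coe_filter, Finset.mem_Icc, Set.mem_ofPred_eq]
      refine ⟨⟨hk, h2.le⟩, ?_⟩
      have hk' : (0:ℝ) < k := by exact_mod_cast hk
      rw [div_le_div_iff₀ (by positivity) hk'] at h
      have h1' : (2:ℝ)^j * (n+1) ≤ k := by exact_mod_cast h1
      have hn : (0:ℝ) < n + 1 := by positivity
      refine le_of_mul_le_mul_right ?_ hn
      linarith
  have hB : ∀ j, ((B j).card : ℝ≥0∞) ≤ 2^(j+1) * M T (U T f j) x * (n+1) := by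
    intro j
    obtain ⟨N, hN⟩ : ∃ N, 2^(j+1) * (n+1) = N + 1 :=
      ⟨2^(j+1) * (n+1) - 1, (Nat.sub_add_cancel (Nat.mul_pos (by positivity) (by omega))).symm⟩
    have e1 : ((B j).card : ℝ≥0∞) = ∑ k ∈ Finset.range (N+1), U T f j (T^[k] x) := by
      simp only [B, hN, Finset.card_filter, U, ← Function.iterate_succ_apply' T]
      push_cast
      refine Finset.sum_nbij' (fun k => k - 1) (fun k => k + 1) ?_ ?_ ?_ ?_ ?_
      · intro k hk; simp only [Finset.mem_Icc, Finset.mem_range] at *; omega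
      · intro k hk; simp only [Finset.mem_Icc, Finset.mem_range] at *; omega
      · intro k hk; simp only [Finset.mem_Icc] at *; omega
      · intro k hk; simp
      · intro k hk
        simp only [Finset.mem_Icc] at hk
        rw [Nat.succ_eq_add_one, Nat.sub_add_cancel hk.1]
    have hN' : (2:ℝ≥0∞)^(j+1) * (n+1) = N + 1 := by exact_mod_cast hN
    calc ((B j).card : ℝ≥0∞) = ((B j).card : ℝ≥0∞) / (N+1) * (N+1) := by
          rw [ENNReal.div_mul_cancel (by simp) (by finiteness)]
      _ ≤ M T (U T f j) x * (N+1) := by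
          gcongr
          rw [e1]
          exact le_iSup (fun n : ℕ =>
            (∑ k ∈ Finset.range (n + 1), U T f j (T^[k] x)) / ((n : ℝ≥0∞) + 1)) N
      _ = _ := by rw [← hN']; ring
  refine ENNReal.div_le_of_le_mul ?_
  rw [← Measure.count_apply MeasurableSet.of_discrete]
  calc Measure.count {k : ℕ | 1 ≤ k ∧ (1 : ℝ) / (n + 1) ≤ |f (T^[k] x)| / k}
      ≤ Measure.count ((Finset.Icc 1 (n+1) : Finset ℕ) ∪ ⋃ j, (B j : Set ℕ)) :=
        measure_mono hsub
    _ ≤ Measure.count ((Finset.Icc 1 (n+1) : Finset ℕ) : Set ℕ)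
        + Measure.count (⋃ j, (B j : Set ℕ)) := measure_union_le _ _
    _ ≤ Measure.count ((Finset.Icc 1 (n+1) : Finset ℕ) : Set ℕ)
        + ∑' j, Measure.count (B j : Set ℕ) := by gcongr; exact measure_iUnion_le _
    _ ≤ (n + 1) + ∑' j, 2^(j+1) * M T (U T f j) x * (n+1) := by
        refine add_le_add ?_ (ENNReal.tsum_le_tsum fun j => ?_)
        · rw [Measure.count_apply_finset]; simp
        · rw [Measure.count_apply_finset]; exact hB j
    _ = _ := by rw [ENNReal.tsum_mul_right]; ring

end AssaniAux

open AssaniAux in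
/-- **Assani's integrability theorem for the maximal counting function `N*` on
`L log L`.** If `∫ |f| log⁺|f| dμ < ∞` then
`N*(f)(x) = sup_{n ≥ 1} (1/n)·#{k ≥ 1 : |f|(Tᵏx)/k ≥ 1/n}` is integrable (the supremum
over `n ≥ 1` is expressed by indexing with `n + 1`, `n ∈ ℕ`, and cardinalities are taken
in `ℝ≥0∞`). -/
theorem assani_Nstar_LlogL
    {X : Type*} [MeasurableSpace X] (μ : Measure X) [IsProbabilityMeasure μ]
    (T : X → X) (hT : MeasurePreserving T μ μ)
    (f : X → ℝ) (hfmeas : Measurable f)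
    (hLlogL : ∫⁻ x, ENNReal.ofReal (|f x| * Real.log (max |f x| 1)) ∂μ < ⊤) :
    ∫⁻ x,
        (⨆ n : ℕ,
          (({k : ℕ | 1 ≤ k ∧ (1 : ℝ) / (n + 1) ≤ |f (T^[k] x)| / k}.encard : ℝ≥0∞)
            / ((n : ℝ≥0∞) + 1))) ∂μ < ⊤ := by
  have habs : Measurable fun x => |f x| := by fun_prop
  have hV : ∀ (j : ℕ) (c : ℝ≥0∞), Measurable fun x => if (2:ℝ)^j ≤ |f x| then c else 0 :=
    fun j c => Measurable.ite (measurableSet_le measurable_const habs)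
      measurable_const measurable_const
  have hU : ∀ j, Measurable (U T f j) := fun j => (hV j 1).comp hT.measurable
  have hU1 : ∀ j x, U T f j x ≤ 1 := fun j x => by unfold U; split_ifs <;> simp
  have hUint : ∀ j, ∫⁻ x, U T f j x ∂μ = ∫⁻ x, (if (2:ℝ)^j ≤ |f x| then 1 else 0) ∂μ :=
    fun j => hT.lintegral_comp (hV j 1)
  have hM := fun j => M_meas hT.measurable (hU j)
  have hsum : ∑' j : ℕ, (j:ℝ≥0∞) * 2^j * ∫⁻ x, U T f j x ∂μ < ⊤ := by
    calc ∑' j : ℕ, (j:ℝ≥0∞) * 2^j * ∫⁻ x, U T f j x ∂μ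
        = ∑' j : ℕ, ∫⁻ x, (if (2:ℝ)^j ≤ |f x| then (j:ℝ≥0∞) * 2^j else 0) ∂μ := by
          congr 1; ext j
          rw [hUint, ← lintegral_const_mul _ (hV j 1)]
          simp
      _ = ∫⁻ x, ∑' j : ℕ, (if (2:ℝ)^j ≤ |f x| then (j:ℝ≥0∞) * 2^j else 0) ∂μ :=
          (lintegral_tsum fun j => (hV j _).aemeasurable).symm
      _ ≤ ∫⁻ x, ENNReal.ofReal (2 / Real.log 2) *
            ENNReal.ofReal (|f x| * Real.log (max |f x| 1)) ∂μ :=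
          lintegral_mono fun x => dyadic_enn _ (abs_nonneg _)
      _ = ENNReal.ofReal (2 / Real.log 2) *
            ∫⁻ x, ENNReal.ofReal (|f x| * Real.log (max |f x| 1)) ∂μ :=
          lintegral_const_mul' _ _ ENNReal.ofReal_ne_top
      _ < ⊤ := ENNReal.mul_lt_top ENNReal.ofReal_lt_top hLlogL
  calc _ ≤ ∫⁻ x, (1 + ∑' j : ℕ, 2^(j+1) * M T (U T f j) x) ∂μ :=
        lintegral_mono fun x => iSup_le fun n => count_pt T f x n
    _ = 1 + ∑' j : ℕ, 2^(j+1) * ∫⁻ x, M T (U T f j) x ∂μ := by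
        rw [lintegral_add_left measurable_const,
          lintegral_tsum fun j => ((hM j).const_mul _).aemeasurable]
        simp [lintegral_const_mul _ (hM _)]
    _ ≤ 1 + ∑' j : ℕ, (2 * (2⁻¹ : ℝ≥0∞)^j + 8 * ((j:ℝ≥0∞) * 2^j * ∫⁻ x, U T f j x ∂μ)) := by
        gcongr with j
        calc (2:ℝ≥0∞)^(j+1) * ∫⁻ x, M T (U T f j) x ∂μ
            ≤ 2^(j+1) * ((2⁻¹ : ℝ≥0∞) ^ (2*j) + (2*j : ℕ) * (2 * ∫⁻ x, U T f j x ∂μ)) := by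
              gcongr; exact strong μ hT (hU j) (hU1 j) (2*j)
          _ = 2 * ((2 * 2⁻¹)^j * (2⁻¹ : ℝ≥0∞)^j)
              + 8 * ((j:ℝ≥0∞) * 2^j * ∫⁻ x, U T f j x ∂μ) := by
              push_cast; ring
          _ = _ := by rw [ENNReal.mul_inv_cancel (by simp) (by simp)]; simp
    _ = 1 + (2 * 2 + 8 * ∑' j : ℕ, (j:ℝ≥0∞) * 2^j * ∫⁻ x, U T f j x ∂μ) := by
        rw [ENNReal.tsum_add, ENNReal.tsum_mul_left, ENNReal.tsum_mul_left,
          ENNReal.tsum_geometric, ENNReal.one_sub_inv_two, inv_inv]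
    _ < ⊤ := by finiteness
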